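/- arXiv:1008.0080 — 3 statements merged into one kernel-verified Lean document; each statement's English description precedes it below -/
import Mathlib

section
/- No N-winning strategy for the Proponent contains a branch in which the Opponent O makes a defensive move. -/
/-! ## Dialogical logic: formulas, statements, moves -/

/-- Propositional formulas, built from atoms (indexed by `ℕ`) and `¬`, `∧`, `∨`, `→`. -/
inductive Formula : Type
  | atom : ℕ → Formula
  | neg : Formula → Formula
  | conj : Formula → Formula → Formula
  | disj : Formula → Formula → Formula
  | impl : Formula → Formula → Formula
  deriving DecidableEq, Inhabited

/-- Statements: formulas together with the three symbolic attacks `∧_L`, `∧_R` and `?`. -/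
inductive Statement : Type
  | form : Formula → Statement
  | conjL : Statement  -- the symbolic attack ∧_L
  | conjR : Statement  -- the symbolic attack ∧_R
  | question : Statement   -- the symbolic attack ?
  deriving DecidableEq, Inhabited

/-- A formula is atomic iff it is an atom. -/
def Formula.isAtomic : Formula → Prop
  | .atom _ => True
  | _ => False

/-- A move of a dialogue: a statement together with a reference.  The reference is
`none` for the initial move, `some (m, true)` for an attack on the assertion made at
move `m`, and `some (m, false)` for a defense against the attack made at move `m`. -/
structure Move : Type where
  stmt : Statement
  ref : Option (ℕ × Bool)
  deriving DecidableEq, Inhabited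

/-! ## Particle rules -/

/-- Particle rules, attacks: `Attacks a φ` holds when the statement `a` is an
admissible attack against the assertion `φ`. -/
inductive Attacks : Statement → Formula → Prop
  | conjL (φ ψ : Formula) : Attacks .conjL (.conj φ ψ)
  | conjR (φ ψ : Formula) : Attacks .conjR (.conj φ ψ)
  | disj (φ ψ : Formula) : Attacks .question (.disj φ ψ)
  | impl (φ ψ : Formula) : Attacks (.form φ) (.impl φ ψ)
  | neg (φ : Formula) : Attacks (.form φ) (.neg φ)

/-- Particle rules, defenses: `Defends s a φ` holds when the statement `s` is an
admissible defense of the assertion `φ` against the attack `a`.  (A negation admits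
no defense.) -/
inductive Defends : Statement → Statement → Formula → Prop
  | conjL (φ ψ : Formula) : Defends (.form φ) .conjL (.conj φ ψ)
  | conjR (φ ψ : Formula) : Defends (.form ψ) .conjR (.conj φ ψ)
  | disjL (φ ψ : Formula) : Defends (.form φ) .question (.disj φ ψ)
  | disjR (φ ψ : Formula) : Defends (.form ψ) .question (.disj φ ψ)
  | impl (φ ψ : Formula) : Defends (.form ψ) (.form φ) (.impl φ ψ)

/-! ## Dialogues

A (finite stage of a) dialogue is modelled as a list of moves; the move at index `i`
is the `i`-th move, made by Proponent P if `i` is even and by Opponent O if `i` is odd. -/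

/-- The skeletal dialogue conditions: move 0 is an assertion of a formula with no
reference, and every later move is an attack on, or a defense against, a specified
earlier move of the other player, in accordance with the particle rules; only
non-atomic assertions may be attacked. -/
def IsDialogue (d : List Move) : Prop :=
  (∀ _ : 0 < d.length, d[0]!.ref = none ∧ ∃ φ : Formula, d[0]!.stmt = .form φ) ∧
  (∀ i : ℕ, 0 < i → i < d.length →
    ∃ (m : ℕ) (z : Bool), d[i]!.ref = some (m, z) ∧ m < i ∧ m % 2 ≠ i % 2 ∧
      (z = true →
        ∃ φ : Formula, d[m]!.stmt = .form φ ∧ ¬ φ.isAtomic ∧ Attacks d[i]!.stmt φ) ∧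
      (z = false →
        ∃ (k : ℕ) (φ : Formula), d[m]!.ref = some (k, true) ∧ k < m ∧
          d[k]!.stmt = .form φ ∧ Defends d[i]!.stmt d[m]!.stmt φ))

/-- Rule D10: P may assert an atomic formula only if O has asserted it earlier. -/
def RuleD10 (d : List Move) : Prop :=
  ∀ i < d.length, i % 2 = 0 → ∀ a : ℕ, d[i]!.stmt = .form (.atom a) →
    ∃ j < i, j % 2 = 1 ∧ d[j]!.stmt = .form (.atom a)

/-- Rule D13: each P-assertion may be attacked at most once. -/
def RuleD13 (d : List Move) : Prop :=
  ∀ m : ℕ, m % 2 = 0 → ∀ i < d.length, ∀ j < d.length,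
    d[i]!.ref = some (m, true) → d[j]!.ref = some (m, true) → i = j

/-- Rule E: O may only react (attack or defend) against the immediately preceding
P-move. -/
def RuleE (d : List Move) : Prop :=
  ∀ i < d.length, i % 2 = 1 → ∃ z : Bool, d[i]!.ref = some (i - 1, z)

/-- The rule set N = {D10, D13}. -/
def NRules (d : List Move) : Prop := RuleD10 d ∧ RuleD13 d

/-- The rule set CL = {D10, D13, E}. -/
def CLRules (d : List Move) : Prop := RuleD10 d ∧ RuleD13 d ∧ RuleE d

/-- A dialogue commences with `φ` when its initial move is P's assertion of `φ`. -/
def CommencesWith (φ : Formula) (d : List Move) : Prop :=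
  0 < d.length ∧ d[0]!.stmt = .form φ

/-- An `S`-dialogue for `φ` (for a rule set `S`): a dialogue commencing with `φ`
that obeys the structural rules `S`.  These are exactly the branches (identified
with their underlying move sequences) of the `S`-dialogue tree for `φ`. -/
def SDialogueFor (S : List Move → Prop) (φ : Formula) (d : List Move) : Prop :=
  IsDialogue d ∧ S d ∧ CommencesWith φ d

/-- P wins a finite `S`-dialogue for `φ`: it ends with a P-move (the last index,
`d.length - 1`, is even, i.e. `d.length` is odd) and it cannot be extended by any
legal further (O-)move. -/
def WinsFor (S : List Move → Prop) (φ : Formula) (d : List Move) : Prop :=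
  SDialogueFor S φ d ∧ d.length % 2 = 1 ∧ ∀ m : Move, ¬ SDialogueFor S φ (d ++ [m])

/-- An `S`-winning strategy for P for `φ`, modelled as a set `T` of `S`-dialogues for
`φ`: the nodes of a rooted subtree of the `S`-dialogue tree for `φ`, each node being
identified with the dialogue leading from the root to it.  The conditions state that
`T` is a nonempty, prefix-closed set of `S`-dialogues for `φ` (hence a rooted subtree
of the `S`-dialogue tree with the same root), that every branch of `T` is a finite
`S`-dialogue won by P (leaves are wins for P, and there is no infinite branch), that
every node at odd depth (an O-move) has exactly one child, and that every node at
even depth (a P-move) has the same children in `T` as in the full dialogue tree. -/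
structure IsWinningStrategy (S : List Move → Prop) (φ : Formula) (T : Set (List Move)) : Prop where
  nonempty : T.Nonempty
  dialogues : ∀ d ∈ T, SDialogueFor S φ d
  prefix_closed : ∀ d ∈ T, ∀ e : List Move, e <+: d → 0 < e.length → e ∈ T
  leaf_wins : ∀ d ∈ T, (∀ m : Move, d ++ [m] ∉ T) → WinsFor S φ d
  no_infinite_branch : ∀ f : ℕ → Move, ∃ n : ℕ, 0 < n ∧ (List.ofFn fun i : Fin n => f i) ∉ T
  odd_unique_child : ∀ d ∈ T, 0 < d.length → d.length % 2 = 0 → ∃! m : Move, d ++ [m] ∈ T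
  even_all_children : ∀ d ∈ T, d.length % 2 = 1 →
    ∀ m : Move, SDialogueFor S φ (d ++ [m]) → d ++ [m] ∈ T

/-- `φ` is `S`-valid iff P has an `S`-winning strategy for `φ`. -/
def SValid (S : List Move → Prop) (φ : Formula) : Prop :=
  ∃ T : Set (List Move), IsWinningStrategy S φ T

/-- `φ` is N-valid (`⊨_N φ`) iff P has an N-winning strategy for `φ`. -/
def NValid (φ : Formula) : Prop := SValid NRules φ

/-! Repeating a defense is always legal for O: it answers the same attack as before, rule D10 only
restricts P, and rule D13 only restricts attacks.  A dialogue in which O has defended can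
therefore never be won by P, since at O's turn it is extended by that very defense.  But every
node of a winning strategy lies on a branch won by P. -/

theorem getElem!_eq_of_isPrefix {α : Type*} [Inhabited α] {l l' : List α} (h : l <+: l') {i : ℕ}
    (hi : i < l.length) : l'[i]! = l[i]! := by
  rw [getElem!_pos l i hi, getElem!_pos l' i (hi.trans_le h.length_le), h.getElem hi]

theorem getElem!_append_singleton_length {α : Type*} [Inhabited α] (l : List α) (a : α) :
    (l ++ [a])[l.length]! = a := by
  simp

theorem exists_forall_ofFn_isPrefix {α : Type*} {s : ℕ → List α} (hs : ∀ n, s n <+: s (n + 1))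
    (hlen : ∀ n, n ≤ (s n).length) :
    ∃ f : ℕ → α, ∀ n, (List.ofFn fun i : Fin n => f i) <+: s n := by
  have hmono {m n : ℕ} (h : m ≤ n) : s m <+: s n :=
    Nat.rel_of_forall_rel_succ_of_le (· <+: ·) hs h
  refine ⟨fun n => (s (n + 1))[n]'(hlen (n + 1)), fun n => ?_⟩
  refine List.prefix_iff_getElem.2 ⟨by simpa using hlen n, fun k hk => ?_⟩
  rw [List.length_ofFn] at hk
  rw [List.getElem_ofFn]
  exact (hmono hk).getElem (hlen (k + 1))

theorem exists_seq_of_forall_append_singleton_mem {α : Type*} {G : Set (List α)}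
    (hne : G.Nonempty) (hG : ∀ l ∈ G, ∃ a, l ++ [a] ∈ G) :
    ∃ f : ℕ → α, ∀ n, ∃ l ∈ G, (List.ofFn fun i : Fin n => f i) <+: l := by
  obtain ⟨l₀, hl₀⟩ := hne
  choose next hnext using hG
  let s : ℕ → G := fun n =>
    n.rec ⟨l₀, hl₀⟩ fun _ l => ⟨l.1 ++ [next l.1 l.2], hnext l.1 l.2⟩
  have hlen (n : ℕ) : n ≤ (s n).1.length := by
    induction n with
    | zero => exact Nat.zero_le _
    | succ n ih => simpa [s] using ih
  obtain ⟨f, hf⟩ := exists_forall_ofFn_isPrefix (s := fun n => (s n).1)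
    (fun n => List.prefix_append _ _) hlen
  exact ⟨f, fun n => ⟨(s n).1, (s n).2, hf n⟩⟩

/-- `IsLegalReply d x i`: played at position `i`, the move `x` is an attack on, or a defense
against, an earlier move of the other player in `d`, in accordance with the particle rules.  This
is the condition that `IsDialogue d` puts on the moves `x = d[i]!` with `0 < i`; the parity of `i`
determines the player. -/
def IsLegalReply (d : List Move) (x : Move) (i : ℕ) : Prop :=
  ∃ (m : ℕ) (z : Bool), x.ref = some (m, z) ∧ m < i ∧ m % 2 ≠ i % 2 ∧
    (z = true → ∃ φ : Formula, d[m]!.stmt = .form φ ∧ ¬ φ.isAtomic ∧ Attacks x.stmt φ) ∧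
    (z = false → ∃ (k : ℕ) (φ : Formula), d[m]!.ref = some (k, true) ∧ k < m ∧
      d[k]!.stmt = .form φ ∧ Defends x.stmt d[m]!.stmt φ)

theorem IsLegalReply.mono {d e : List Move} {x : Move} {i j : ℕ} (h : IsLegalReply d x i)
    (hde : ∀ k < i, e[k]! = d[k]!) (hij : i ≤ j) (hpar : i % 2 = j % 2) :
    IsLegalReply e x j := by
  obtain ⟨m, z, href, hmi, hplayer, hattack, hdefense⟩ := h
  refine ⟨m, z, href, hmi.trans_le hij, hpar ▸ hplayer, ?_, fun hz => ?_⟩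
  · rwa [hde m hmi]
  · obtain ⟨k, φ, hk, hkm, hφ, hdef⟩ := hdefense hz
    refine ⟨k, φ, ?_, hkm, ?_, ?_⟩
    · rwa [hde m hmi]
    · rwa [hde k (hkm.trans hmi)]
    · rwa [hde m hmi]

theorem IsDialogue.append_singleton {d : List Move} {x : Move} (hd : IsDialogue d)
    (hx : IsLegalReply d x d.length) : IsDialogue (d ++ [x]) := by
  have hpos : 0 < d.length := by
    obtain ⟨m, -, -, hm, -⟩ := hx
    exact hm.pos
  have hold {i : ℕ} (hi : i < d.length) : (d ++ [x])[i]! = d[i]! :=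
    getElem!_eq_of_isPrefix (List.prefix_append d [x]) hi
  refine ⟨fun _ => ?_, fun i hi0 hi => ?_⟩
  · rw [hold hpos]
    exact hd.1 hpos
  change IsLegalReply (d ++ [x]) (d ++ [x])[i]! i
  rcases Nat.lt_succ_iff_lt_or_eq.1 (by simpa using hi) with hi | rfl
  · rw [hold hi]
    exact IsLegalReply.mono (hd.2 i hi0 hi) (fun k hk => hold (hk.trans hi)) le_rfl rfl
  · rw [getElem!_append_singleton_length]
    exact hx.mono (fun k hk => hold hk) le_rfl rfl

theorem IsDialogue.append_getElem! {d : List Move} (hd : IsDialogue d) {i : ℕ} (hi0 : 0 < i)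
    (hi : i < d.length) (hpar : i % 2 = d.length % 2) : IsDialogue (d ++ [d[i]!]) :=
  hd.append_singleton
    (IsLegalReply.mono (hd.2 i hi0 hi) (fun _ _ => rfl) hi.le hpar)

theorem CommencesWith.append {φ : Formula} {d : List Move} (hd : CommencesWith φ d)
    (e : List Move) : CommencesWith φ (d ++ e) := by
  have hpre := List.prefix_append d e
  exact ⟨hd.1.trans_le hpre.length_le, by rw [getElem!_eq_of_isPrefix hpre hd.1, hd.2]⟩

/-- The rule set `S` never forbids O, at O's turn (`d.length` odd), to repeat a defense O has
already made in `d`.  (Rule E does: it lets O react only to the move just made.) -/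
def AllowsRepeatedDefense (S : List Move → Prop) : Prop :=
  ∀ ⦃d : List Move⦄, S d → d.length % 2 = 1 → ∀ i < d.length, i % 2 = 1 →
    ∀ m : ℕ, d[i]!.ref = some (m, false) → S (d ++ [d[i]!])

theorem RuleD10.append_singleton {d : List Move} (hd : RuleD10 d) (hodd : d.length % 2 = 1)
    (x : Move) : RuleD10 (d ++ [x]) := by
  intro i hi heven a ha
  have hi : i < d.length := by
    rw [List.length_append, List.length_singleton] at hi
    omega
  have hold {k : ℕ} (hk : k < d.length) : (d ++ [x])[k]! = d[k]! :=
    getElem!_eq_of_isPrefix (List.prefix_append d [x]) hk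
  rw [hold hi] at ha
  obtain ⟨j, hji, hjodd, hj⟩ := hd i hi heven a ha
  exact ⟨j, hji, hjodd, by rwa [hold (hji.trans hi)]⟩

theorem RuleD13.append_singleton {d : List Move} (hd : RuleD13 d) {x : Move}
    (hx : ∀ m : ℕ, x.ref ≠ some (m, true)) : RuleD13 (d ++ [x]) := by
  have hattack {m i : ℕ} (hi : i < (d ++ [x]).length)
      (href : (d ++ [x])[i]!.ref = some (m, true)) :
      i < d.length ∧ d[i]!.ref = some (m, true) := by
    rcases Nat.lt_succ_iff_lt_or_eq.1 (by simpa using hi) with hi | rfl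
    · rw [getElem!_eq_of_isPrefix (List.prefix_append d [x]) hi] at href
      exact ⟨hi, href⟩
    · rw [getElem!_append_singleton_length] at href
      exact absurd href (hx m)
  intro m hm i hi j hj hmi hmj
  obtain ⟨hi, hmi⟩ := hattack hi hmi
  obtain ⟨hj, hmj⟩ := hattack hj hmj
  exact hd m hm i hi j hj hmi hmj

theorem allowsRepeatedDefense_nRules : AllowsRepeatedDefense NRules := by
  rintro d ⟨hD10, hD13⟩ hodd i - - m hm
  exact ⟨hD10.append_singleton hodd _, hD13.append_singleton fun _ h => nomatch hm.symm.trans h⟩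

theorem AllowsRepeatedDefense.not_winsFor {S : List Move → Prop} (hS : AllowsRepeatedDefense S)
    {φ : Formula} {d : List Move} {i m : ℕ} (hi : i < d.length) (hodd : i % 2 = 1)
    (hm : d[i]!.ref = some (m, false)) : ¬ WinsFor S φ d := by
  rintro ⟨⟨hdialogue, hrules, hφ⟩, hturn, hstuck⟩
  exact hstuck d[i]! ⟨hdialogue.append_getElem! (by omega) hi (hodd.trans hturn.symm),
    hS hrules hturn i hi hodd m hm, hφ.append _⟩

theorem IsWinningStrategy.exists_winsFor_of_mem {S : List Move → Prop} {φ : Formula}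
    {T : Set (List Move)} (hT : IsWinningStrategy S φ T) {d : List Move} (hd : d ∈ T) :
    ∃ e ∈ T, d <+: e ∧ WinsFor S φ e := by
  by_contra! hlost
  have hextend : ∀ e ∈ {e ∈ T | d <+: e}, ∃ x, e ++ [x] ∈ {e ∈ T | d <+: e} := by
    rintro e ⟨heT, hde⟩
    obtain ⟨x, hx⟩ : ∃ x, e ++ [x] ∈ T := by
      by_contra! hleaf
      exact hlost e heT hde (hT.leaf_wins e heT hleaf)
    exact ⟨x, hx, hde.trans (List.prefix_append e [x])⟩
  obtain ⟨f, hf⟩ := exists_seq_of_forall_append_singleton_mem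
    (G := {e ∈ T | d <+: e}) ⟨d, hd, List.prefix_rfl⟩ hextend
  obtain ⟨n, hn, hnT⟩ := hT.no_infinite_branch f
  obtain ⟨e, ⟨heT, -⟩, hfe⟩ := hf n
  exact hnT (hT.prefix_closed e heT _ hfe (by rwa [List.length_ofFn]))

theorem no_winning_strategy_with_o_defense_general {S : List Move → Prop}
    (hS : AllowsRepeatedDefense S) {φ : Formula} {T : Set (List Move)}
    (hT : IsWinningStrategy S φ T) :
    ∀ d ∈ T, ∀ i < d.length, i % 2 = 1 → ∀ m : ℕ, d[i]!.ref ≠ some (m, false) := by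
  intro d hd i hi hodd m hm
  obtain ⟨e, -, hde, hwin⟩ := hT.exists_winsFor_of_mem hd
  rw [← getElem!_eq_of_isPrefix hde hi] at hm
  exact hS.not_winsFor (hi.trans_le hde.length_le) hodd hm hwin

/-- No N-winning strategy for the Proponent contains a branch in
which the Opponent O makes a defensive move: in any N-winning strategy `T` for any
formula `φ`, no node (dialogue) of `T` contains a defensive move at an odd index
(an O-move). -/
theorem no_winning_strategy_with_o_defense (φ : Formula) (T : Set (List Move))
    (hT : IsWinningStrategy NRules φ T) :
    ∀ d ∈ T, ∀ i < d.length, i % 2 = 1 → ∀ m : ℕ, d[i]!.ref ≠ some (m, false) :=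
  no_winning_strategy_with_o_defense_general allowsRepeatedDefense_nRules hT
end

section
/- For every propositional formula φ: if the negation ¬φ is N-valid, then φ is itself a negation, i.e., φ = ¬ψ for some formula ψ, and moreover ψ is N-valid. -/
/-!
P has an `S`-winning strategy for `φ` iff P can force a win from the empty position, a notion to
which one can apply induction. Let P force a win for `¬φ`, and let O attack `¬φ` by asserting `φ`.
P has to attack this assertion in turn. If `φ` were not a negation, O could defend `φ` and repeat
this defense forever, as rule D13 restricts only attacks. So `φ = ¬ψ`, and P attacks by asserting
`ψ`.

From here on P plays for `ψ`, except that P may attack `¬ψ`, and so assert `ψ`, again and again. Let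
O always answer such a repetition by the attack made on the first assertion of `ψ`. All the copies
of these two moves can then be identified. This does not delay P forever, since P forces a win, and
it turns a win for `¬¬ψ` into a win for `ψ`.
-/

section Forcing

/-- The positions with P to move from which P can force a win. The empty sequence of moves counts
as such a position: there, P has to open the dialogue by asserting `φ`. -/
inductive Winning (S : List Move → Prop) (φ : Formula) : List Move → Prop
  | intro {d : List Move} (m : Move) (hm : SDialogueFor S φ (d ++ [m]))
      (h : ∀ n, SDialogueFor S φ (d ++ [m] ++ [n]) → Winning S φ (d ++ [m] ++ [n])) :
      Winning S φ d

/-- The positions with P to move from which P wins by always playing the move that the function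
`σ` assigns to the current position. -/
inductive WinningBy (S : List Move → Prop) (φ : Formula) (σ : List Move → Move) :
    List Move → Prop
  | intro {d : List Move} (hσ : SDialogueFor S φ (d ++ [σ d]))
      (h : ∀ n, SDialogueFor S φ (d ++ [σ d] ++ [n]) →
        WinningBy S φ σ (d ++ [σ d] ++ [n])) :
      WinningBy S φ σ d

/-- `d` arises when P plays by `σ` from the opening move on, and O plays any legal moves. -/
def Follows (S : List Move → Prop) (φ : Formula) (σ : List Move → Move) (d : List Move) : Prop :=
  ∀ e m, e ++ [m] <+: d → SDialogueFor S φ (e ++ [m]) ∧ (e.length % 2 = 0 → m = σ e)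

variable {S : List Move → Prop} {φ : Formula} {σ τ : List Move → Move} {d : List Move}

theorem WinningBy.congr (h : WinningBy S φ σ d) (hστ : ∀ e, d <+: e → σ e = τ e) :
    WinningBy S φ τ d := by
  induction h with
  | @intro d hσ _ ih =>
    have hd : σ d = τ d := hστ d List.prefix_rfl
    rw [hd] at hσ ih
    refine .intro hσ fun n hn => ih n hn fun e he => hστ e ?_
    rw [List.append_assoc] at he
    exact (List.prefix_append ..).trans he

theorem Winning.exists_winningBy (h : Winning S φ d) : ∃ σ, WinningBy S φ σ d := by
  induction h with
  | @intro d m hm _ ih =>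
    choose! τ hτ using ih
    -- `e[d.length + 1]!` is O's reply to `m`.
    let σ : List Move → Move := fun e => if e.length ≤ d.length then m else τ e[d.length + 1]! e
    have hσd : σ d = m := if_pos le_rfl
    refine ⟨σ, .intro (hσd ▸ hm) fun n hn => ?_⟩
    rw [hσd] at hn ⊢
    refine (hτ n hn).congr fun e ⟨l, hl⟩ => ?_
    subst hl
    simp [σ]

theorem follows_nil : Follows S φ σ [] := by
  simp [Follows]

theorem follows_concat {m : Move} : Follows S φ σ (d ++ [m]) ↔
    Follows S φ σ d ∧ SDialogueFor S φ (d ++ [m]) ∧ (d.length % 2 = 0 → m = σ d) := by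
  constructor
  · exact fun h => ⟨fun e n he => h e n (he.trans (List.prefix_append ..)),
      h d m List.prefix_rfl⟩
  · rintro ⟨hd, hm⟩ e n he
    rcases List.prefix_concat_iff.1 he with heq | he
    · obtain ⟨rfl, rfl⟩ : e = d ∧ n = m := by simpa using heq
      exact hm
    · exact hd e n he

theorem Follows.sDialogueFor (h : Follows S φ σ d) (hd : 0 < d.length) : SDialogueFor S φ d := by
  obtain rfl | ⟨e, m, rfl⟩ := List.eq_nil_or_concat' d
  · simp at hd
  · exact (h e m List.prefix_rfl).1

theorem WinningBy.of_follows (h₀ : WinningBy S φ σ []) (h : Follows S φ σ d)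
    (hd : d.length % 2 = 0) : WinningBy S φ σ d := by
  suffices (d.length % 2 = 0 → WinningBy S φ σ d) ∧
      (d.length % 2 = 1 → ∀ n, SDialogueFor S φ (d ++ [n]) → WinningBy S φ σ (d ++ [n])) from
    this.1 hd
  clear hd
  induction d using List.reverseRecOn with
  | nil => simpa using h₀
  | append_singleton d m ih =>
    obtain ⟨hd, hm, hσ⟩ := follows_concat.1 h
    obtain ⟨ihP, ihO⟩ := ih hd
    simp only [List.length_append, List.length_singleton]
    refine ⟨fun hl => ihO (by omega) m hm, fun hl => ?_⟩
    have hl : d.length % 2 = 0 := by omega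
    rw [hσ hl]
    cases ihP hl with
    | intro _ h => exact h

theorem WinningBy.exists_not_follows (h : WinningBy S φ σ d) (b : ℕ → Move) {n : ℕ}
    (hd : List.ofFn (fun i : Fin n => b i) = d) (hn : n % 2 = 0) :
    ∃ k, 0 < k ∧ ¬ Follows S φ σ (List.ofFn fun i : Fin k => b i) := by
  induction h generalizing n with
  | @intro d _ _ ih =>
    by_contra! hcon
    have hsucc (k : ℕ) : List.ofFn (fun i : Fin (k + 1) => b i) =
        List.ofFn (fun i : Fin k => b i) ++ [b k] := List.ofFn_succ_last
    have hm := hcon (n + 1) (by omega)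
    have hn' := hcon (n + 2) (by omega)
    rw [hsucc, hd, follows_concat] at hm
    have hσ : b n = σ d := hm.2.2 (by simpa [← hd] using hn)
    have hstep : List.ofFn (fun i : Fin (n + 2) => b i) = d ++ [σ d] ++ [b (n + 1)] := by
      rw [hsucc, hsucc, hd, hσ]
    obtain ⟨k, hk, hk'⟩ := ih _ (hstep ▸ hn'.sDialogueFor (by simp)) hstep (by omega)
    exact hk' (hcon k hk)

theorem WinningBy.isWinningStrategy (h : WinningBy S φ σ []) :
    IsWinningStrategy S φ {d | 0 < d.length ∧ Follows S φ σ d} := by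
  have child {d} (hd : Follows S φ σ d) (hl : d.length % 2 = 0) : Follows S φ σ (d ++ [σ d]) := by
    cases h.of_follows hd hl with
    | intro hσ _ => exact follows_concat.2 ⟨hd, hσ, fun _ => rfl⟩
  have children {d} (hd : Follows S φ σ d) (hl : d.length % 2 = 1) (m : Move)
      (hm : SDialogueFor S φ (d ++ [m])) : Follows S φ σ (d ++ [m]) :=
    follows_concat.2 ⟨hd, hm, by omega⟩
  constructor
  case nonempty => exact ⟨_, by simp, child follows_nil rfl⟩
  case dialogues => exact fun d hd => hd.2.sDialogueFor hd.1
  case prefix_closed => exact fun d hd e he hl => ⟨hl, fun a m ha => hd.2 a m (ha.trans he)⟩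
  case leaf_wins =>
    intro d ⟨hpos, hd⟩ hleaf
    have hl : d.length % 2 = 1 := by
      by_contra hl
      exact hleaf (σ d) ⟨by simp, child hd (by omega)⟩
    exact ⟨hd.sDialogueFor hpos, hl, fun m hm => hleaf m ⟨by simp, children hd hl m hm⟩⟩
  case no_infinite_branch =>
    intro b
    obtain ⟨k, hk, hk'⟩ := h.exists_not_follows b (n := 0) (by simp) rfl
    exact ⟨k, hk, fun hmem => hk' hmem.2⟩
  case odd_unique_child =>
    exact fun d hd _ hl =>
      ⟨σ d, ⟨by simp, child hd.2 hl⟩, fun m hm => (follows_concat.1 hm.2).2.2 hl⟩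
  case even_all_children => exact fun d hd hl m hm => ⟨by simp, children hd.2 hl m hm⟩

theorem exists_branch_of_chain {α : Type*} (f : ℕ → List α) (hf : ∀ n, f n <+: f (n + 1))
    (hlen : ∀ n, (f n).length < (f (n + 1)).length) :
    ∃ b : ℕ → α, ∀ n, List.ofFn (fun i : Fin n => b i) <+: f n := by
  have mono {i j : ℕ} (hij : i ≤ j) : f i <+: f j := by
    induction hij with
    | refl => exact List.prefix_rfl
    | step _ ih => exact ih.trans (hf _)
  have hlt (n : ℕ) : n < (f (n + 1)).length :=
    Nat.lt_of_le_of_lt (strictMono_nat_of_lt_succ hlen).le_apply (hlen n)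
  refine ⟨fun n => (f (n + 1))[n]'(hlt n), fun n => List.prefix_iff_getElem.2 ⟨?_, ?_⟩⟩
  · simpa using (strictMono_nat_of_lt_succ hlen).le_apply
  · intro i hi
    rw [List.getElem_ofFn]
    exact (mono (by simpa using hi)).getElem (hlt i)

variable {T : Set (List Move)}

theorem IsWinningStrategy.wellFounded_extension (hT : IsWinningStrategy S φ T) :
    WellFounded fun e d : T => d.1 <+: e.1 ∧ d.1.length < e.1.length := by
  refine wellFounded_iff_isEmpty_descending_chain.2 ⟨fun ⟨f, hf⟩ => ?_⟩
  obtain ⟨b, hb⟩ := exists_branch_of_chain (fun n => (f n).1) (fun n => (hf n).1)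
    (fun n => (hf n).2)
  obtain ⟨n, hn, hbn⟩ := hT.no_infinite_branch b
  exact hbn (hT.prefix_closed _ (f n).2 _ (hb n) (by simpa using hn))

theorem IsWinningStrategy.winning_of_mem (hT : IsWinningStrategy S φ T) (hd : d ∈ T)
    (hpos : 0 < d.length) (hl : d.length % 2 = 0) : Winning S φ d := by
  induction hd' : (⟨d, hd⟩ : T) using hT.wellFounded_extension.induction generalizing d with
  | _ d' ih =>
    subst hd'
    obtain ⟨m, hm, -⟩ := hT.odd_unique_child d hd hpos hl
    refine .intro m (hT.dialogues _ hm) fun n hn => ?_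
    have hmem := hT.even_all_children _ hm (by grind) n hn
    exact ih ⟨_, hmem⟩ ⟨by simp, by simp⟩ hmem (by simp) (by grind) rfl

theorem eq_singleton_opening_of_sDialogueFor {m : Move} (h : SDialogueFor S φ [m]) :
    m = ⟨.form φ, none⟩ := by
  obtain ⟨⟨h0, -⟩, -, -, hstmt⟩ := h
  cases m
  simp_all

theorem IsWinningStrategy.winning_nil (hT : IsWinningStrategy S φ T) : Winning S φ [] := by
  obtain ⟨d, hd⟩ := hT.nonempty
  obtain ⟨m, l, rfl⟩ := List.exists_cons_of_length_pos (hT.dialogues d hd).2.2.1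
  have hm : [m] ∈ T := hT.prefix_closed _ hd _ ⟨l, rfl⟩ (by simp)
  exact .intro m (hT.dialogues _ hm) fun n hn =>
    hT.winning_of_mem (hT.even_all_children _ hm rfl n hn) (by simp) (by simp)

theorem sValid_iff_winning_nil : SValid S φ ↔ Winning S φ [] := by
  constructor
  · exact fun ⟨_, hT⟩ => hT.winning_nil
  · intro h
    obtain ⟨σ, hσ⟩ := h.exists_winningBy
    exact ⟨_, hσ.isWinningStrategy⟩

end Forcing

section Legality

theorem getElem!_append_of_lt {α : Type*} [Inhabited α] {d : List α} {i : ℕ} (l : List α)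
    (hi : i < d.length) : (d ++ l)[i]! = d[i]! := by
  simp [List.getElem!_eq_getElem?_getD, List.getElem?_append_left hi]

theorem getElem!_concat_length {α : Type*} [Inhabited α] (d : List α) (m : α) :
    (d ++ [m])[d.length]! = m := by
  simp

/-- By the particle rules, the statement `s` reacts to move `m` of `d`: as an attack on it for
`true`, as a defense against it for `false` (the encoding of `Move.ref`). -/
def ReactsTo (d : List Move) (s : Statement) (m : ℕ) : Bool → Prop
  | true => ∃ φ : Formula, d[m]!.stmt = .form φ ∧ ¬ φ.isAtomic ∧ Attacks s φ
  | false => ∃ (k : ℕ) (φ : Formula), d[m]!.ref = some (k, true) ∧ k < m ∧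
      d[k]!.stmt = .form φ ∧ Defends s d[m]!.stmt φ

/-- The N-dialogue `d` may be continued by the statement `s` as a reaction to move `m`, in the
sense of `ReactsTo`. -/
structure IsLegal (d : List Move) (s : Statement) (m : ℕ) (z : Bool) : Prop where
  lt : m < d.length
  parity : m % 2 ≠ d.length % 2
  reactsTo : ReactsTo d s m z
  d10 : d.length % 2 = 0 → ∀ a : ℕ, s = .form (.atom a) →
    ∃ j < d.length, j % 2 = 1 ∧ d[j]!.stmt = .form (.atom a)
  d13 : m % 2 = 0 → z = true → ∀ i < d.length, d[i]!.ref ≠ some (m, true)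

variable {φ : Formula} {d : List Move} {n : Move} {s : Statement} {i m : ℕ} {z : Bool}

theorem reactsTo_append_iff (l : List Move) (hm : m < d.length) :
    ReactsTo (d ++ l) s m z ↔ ReactsTo d s m z := by
  cases z with
  | true => simp only [ReactsTo, getElem!_append_of_lt l hm]
  | false =>
    simp only [ReactsTo, getElem!_append_of_lt l hm]
    refine exists₂_congr fun k φ => and_congr_right fun _ => and_congr_right fun hk => ?_
    rw [getElem!_append_of_lt l (hk.trans hm)]

theorem isDialogue_iff : IsDialogue d ↔
    (0 < d.length → d[0]!.ref = none ∧ ∃ φ : Formula, d[0]!.stmt = .form φ) ∧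
    ∀ i < d.length, 0 < i → ∃ (m : ℕ) (z : Bool), d[i]!.ref = some (m, z) ∧ m < i ∧
      m % 2 ≠ i % 2 ∧ ReactsTo d d[i]!.stmt m z := by
  have hreact (s : Statement) (m : ℕ) (z : Bool) : ReactsTo d s m z ↔
      (z = true → ∃ φ : Formula, d[m]!.stmt = .form φ ∧ ¬ φ.isAtomic ∧ Attacks s φ) ∧
      (z = false → ∃ (k : ℕ) (φ : Formula), d[m]!.ref = some (k, true) ∧ k < m ∧
        d[k]!.stmt = .form φ ∧ Defends s d[m]!.stmt φ) := by
    cases z <;> simp [ReactsTo]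
  simp only [hreact, IsDialogue]
  exact and_congr_right fun _ => forall_congr' fun _ => Imp.swap

theorem isDialogue_concat_iff (hd : 0 < d.length) : IsDialogue (d ++ [n]) ↔ IsDialogue d ∧
    ∃ (m : ℕ) (z : Bool), n.ref = some (m, z) ∧ m < d.length ∧ m % 2 ≠ d.length % 2 ∧
      ReactsTo d n.stmt m z := by
  have hmove {i : ℕ} {n' : Move} (hi : i ≤ d.length) :
      (∃ (m : ℕ) (z : Bool), n'.ref = some (m, z) ∧ m < i ∧ m % 2 ≠ i % 2 ∧
        ReactsTo (d ++ [n]) n'.stmt m z) ↔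
      ∃ (m : ℕ) (z : Bool), n'.ref = some (m, z) ∧ m < i ∧ m % 2 ≠ i % 2 ∧
        ReactsTo d n'.stmt m z :=
    exists₂_congr fun m z => and_congr_right fun _ => and_congr_right fun hm =>
      and_congr_right fun _ => reactsTo_append_iff _ (hm.trans_le hi)
  have hmoves : (∀ i < d.length, 0 < i → ∃ (m : ℕ) (z : Bool), (d ++ [n])[i]!.ref = some (m, z) ∧
        m < i ∧ m % 2 ≠ i % 2 ∧ ReactsTo (d ++ [n]) (d ++ [n])[i]!.stmt m z) ↔
      ∀ i < d.length, 0 < i → ∃ (m : ℕ) (z : Bool), d[i]!.ref = some (m, z) ∧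
        m < i ∧ m % 2 ≠ i % 2 ∧ ReactsTo d d[i]!.stmt m z :=
    forall₃_congr fun i hi _ => by rw [getElem!_append_of_lt _ hi, hmove hi.le]
  rw [isDialogue_iff, isDialogue_iff, List.length_append, List.length_singleton,
    Nat.forall_lt_succ_right, hmoves, getElem!_concat_length, hmove le_rfl,
    getElem!_append_of_lt _ hd, and_assoc]
  simp only [hd, Nat.succ_pos, true_imp_iff]

theorem ruleD10_concat_iff : RuleD10 (d ++ [n]) ↔ RuleD10 d ∧
    (d.length % 2 = 0 → ∀ a : ℕ, n.stmt = .form (.atom a) →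
      ∃ j < d.length, j % 2 = 1 ∧ d[j]!.stmt = .form (.atom a)) := by
  have hasserted (a : ℕ) {i : ℕ} (hi : i ≤ d.length) :
      (∃ j < i, j % 2 = 1 ∧ (d ++ [n])[j]!.stmt = .form (.atom a)) ↔
      ∃ j < i, j % 2 = 1 ∧ d[j]!.stmt = .form (.atom a) :=
    exists_congr fun j => and_congr_right fun hj => by
      rw [getElem!_append_of_lt _ (hj.trans_le hi)]
  rw [RuleD10, List.length_append, List.length_singleton, Nat.forall_lt_succ_right,
    getElem!_concat_length]
  simp only [hasserted _ le_rfl]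
  refine and_congr_left fun _ => forall₄_congr fun i hi _ a => ?_
  rw [getElem!_append_of_lt _ hi, hasserted a hi.le]

theorem ruleD13_concat_iff : RuleD13 (d ++ [n]) ↔ RuleD13 d ∧
    ∀ m : ℕ, m % 2 = 0 → n.ref = some (m, true) → ∀ i < d.length, d[i]!.ref ≠ some (m, true) := by
  simp only [RuleD13, List.length_append, List.length_singleton, Nat.forall_lt_succ_right,
    getElem!_concat_length]
  grind [getElem!_append_of_lt]

theorem sDialogueFor_concat_iff (hd : 0 < d.length) :
    SDialogueFor NRules φ (d ++ [n]) ↔ SDialogueFor NRules φ d ∧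
      ∃ (m : ℕ) (z : Bool), n.ref = some (m, z) ∧ IsLegal d n.stmt m z := by
  have hcomm : CommencesWith φ (d ++ [n]) ↔ CommencesWith φ d := by
    simp [CommencesWith, hd]
  rw [SDialogueFor, SDialogueFor, NRules, NRules, hcomm, isDialogue_concat_iff hd,
    ruleD10_concat_iff, ruleD13_concat_iff]
  constructor
  · rintro ⟨⟨hdial, m, z, hr, hlt, hpar, hreact⟩, ⟨⟨h10, h10n⟩, h13, h13n⟩, hc⟩
    exact ⟨⟨hdial, ⟨h10, h13⟩, hc⟩, m, z, hr, hlt, hpar, hreact, h10n,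
      fun hm hz => h13n m hm (hz ▸ hr)⟩
  · rintro ⟨⟨hdial, ⟨h10, h13⟩, hc⟩, m, z, hr, hlegal⟩
    refine ⟨⟨hdial, m, z, hr, hlegal.lt, hlegal.parity, hlegal.reactsTo⟩,
      ⟨⟨h10, hlegal.d10⟩, h13, fun m' hm' hr' => ?_⟩, hc⟩
    obtain ⟨rfl, rfl⟩ : m = m' ∧ z = true := by simpa [hr] using hr'
    exact hlegal.d13 hm' rfl

theorem sDialogueFor_concat_mk_iff (hd : 0 < d.length) :
    SDialogueFor NRules φ (d ++ [⟨s, some (m, z)⟩]) ↔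
      SDialogueFor NRules φ d ∧ IsLegal d s m z := by
  rw [sDialogueFor_concat_iff hd]
  simp only [Option.some.injEq, Prod.mk.injEq, and_assoc, exists_and_left, exists_eq_left']

theorem IsDialogue.reactsTo_of_ref_eq (h : IsDialogue d) (hi : i < d.length)
    (hr : d[i]!.ref = some (m, z)) : m < i ∧ m % 2 ≠ i % 2 ∧ ReactsTo d d[i]!.stmt m z := by
  rcases Nat.eq_zero_or_pos i with rfl | hpos
  · cases (h.1 hi).1.symm.trans hr
  · obtain ⟨m', z', hr', h⟩ := (isDialogue_iff.1 h).2 i hi hpos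
    cases hr.symm.trans hr'
    exact h

theorem IsDialogue.ref_one (h : IsDialogue d) (hd : 1 < d.length) :
    d[1]!.ref = some (0, true) := by
  obtain ⟨m, z, hr, hm, -, hreact⟩ := (isDialogue_iff.1 h).2 1 hd one_pos
  obtain rfl : m = 0 := by omega
  cases z with
  | true => exact hr
  | false =>
    obtain ⟨k, _, hk, -⟩ := hreact
    cases (h.1 (by omega)).1.symm.trans hk

theorem sDialogueFor_singleton (hφ : ¬ φ.isAtomic) :
    SDialogueFor NRules φ [⟨.form φ, none⟩] := by
  refine ⟨isDialogue_iff.2 ⟨by simp, by simp⟩, ⟨?_, ?_⟩, by simp [CommencesWith]⟩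
  · intro i hi _ a ha
    obtain rfl : i = 0 := by simpa using hi
    obtain rfl : φ = .atom a := by simpa using ha
    exact absurd trivial hφ
  · intro m _ i hi j hj _ _
    simp only [List.length_singleton] at hi hj
    omega

theorem IsLegal.of_opponent_defense (hd : d.length % 2 = 1) (hi : i < d.length)
    (hpar : i % 2 = 0) (h : ReactsTo d s i false) : IsLegal d s i false where
  lt := hi
  parity := by omega
  reactsTo := h
  d10 := by omega
  d13 := by simp

theorem IsDialogue.isLegal_attack_last (h : IsDialogue (d ++ [n])) (hd : d.length % 2 = 0)
    (hs : ReactsTo (d ++ [n]) s d.length true) : IsLegal (d ++ [n]) s d.length true where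
  lt := by simp
  parity := by grind
  reactsTo := hs
  d10 := by grind
  d13 _ _ i hi hr := by
    have hlt := (h.reactsTo_of_ref_eq hi hr).1
    simp only [List.length_append, List.length_singleton] at hi
    omega

end Legality

section Negation

variable {φ : Formula} {d : List Move} {s t : Statement} {i : ℕ} {z : Bool}

/-- The dialogue in which P asserts `¬φ` and O attacks this by asserting `φ`. -/
def negOpening (φ : Formula) : List Move :=
  [⟨.form (.neg φ), none⟩, ⟨.form φ, some (0, true)⟩]

@[simp]
theorem length_negOpening : (negOpening φ).length = 2 :=
  rfl

theorem Winning.after_negOpening (h : Winning NRules (.neg φ) []) :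
    Winning NRules (.neg φ) (negOpening φ) := by
  obtain ⟨m, hm, h⟩ := h
  obtain rfl := eq_singleton_opening_of_sDialogueFor hm
  refine h ⟨.form φ, some (0, true)⟩ ((sDialogueFor_concat_mk_iff (by simp)).2 ⟨hm, ?_⟩)
  exact { lt := by simp
          parity := by simp
          reactsTo := ⟨.neg φ, by simp, id, .neg φ⟩
          d10 := by simp
          d13 := by simp }

theorem not_defends_neg : ¬ Defends s t (.neg φ) := by
  rintro ⟨⟩

theorem reactsTo_one_negOpening_iff :
    ReactsTo (negOpening φ) s 1 z ↔ z = true ∧ ¬ φ.isAtomic ∧ Attacks s φ := by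
  cases z with
  | true => simp [ReactsTo, negOpening]
  | false =>
    simp only [ReactsTo, negOpening, Bool.false_eq_true, false_and, iff_false]
    rintro ⟨k, χ, hr, -, hχ, hdef⟩
    obtain rfl : 0 = k := by simpa using hr
    obtain rfl : .neg φ = χ := by simpa using hχ
    exact not_defends_neg hdef

/-- O may repeat the same defense forever. -/
theorem Winning.not_reactsTo_false (hw : Winning NRules φ d) (hd : d.length % 2 = 0)
    (hi : i < d.length) (hpar : i % 2 = 0) : ¬ ReactsTo d s i false := by
  induction hw with
  | @intro d m hm _ ih =>
    intro hs
    have hs' : ReactsTo (d ++ [m]) s i false := (reactsTo_append_iff _ hi).2 hs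
    have hi' : i < (d ++ [m]).length := by grind
    refine ih ⟨s, some (i, false)⟩ ((sDialogueFor_concat_mk_iff (by simp)).2 ⟨hm, ?_⟩)
      (by grind) (by grind) ((reactsTo_append_iff _ hi').2 hs')
    exact .of_opponent_defense (by grind) hi' hpar hs'

theorem exists_defends_of_attacks (h : Attacks s φ) (hφ : ∀ ψ, φ ≠ .neg ψ) :
    ∃ t, Defends t s φ := by
  cases h with
  | conjL => exact ⟨_, .conjL ..⟩
  | conjR => exact ⟨_, .conjR ..⟩
  | disj => exact ⟨_, .disjL ..⟩
  | impl => exact ⟨_, .impl ..⟩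
  | neg χ => exact absurd rfl (hφ χ)

theorem exists_eq_neg_of_winning_negOpening (h : Winning NRules (.neg φ) (negOpening φ)) :
    ∃ ψ, φ = .neg ψ := by
  by_contra! hφ
  obtain ⟨⟨s, r⟩, hm, h⟩ := h
  obtain ⟨-, i, z, rfl, hlegal⟩ := (sDialogueFor_concat_iff (by simp)).1 hm
  obtain rfl : i = 1 := by
    have hlt := hlegal.lt
    have hpar := hlegal.parity
    rw [length_negOpening] at hlt hpar
    omega
  obtain ⟨rfl, -, hs⟩ := reactsTo_one_negOpening_iff.1 hlegal.reactsTo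
  obtain ⟨t, ht⟩ := exists_defends_of_attacks hs hφ
  have hdef : ReactsTo (negOpening φ ++ [⟨s, some (1, true)⟩]) t 2 false :=
    ⟨1, φ, by simp [negOpening], by simp, by simp [negOpening], by simpa [negOpening] using ht⟩
  have hO : SDialogueFor NRules (.neg φ)
      (negOpening φ ++ [⟨s, some (1, true)⟩] ++ [⟨t, some (2, false)⟩]) :=
    (sDialogueFor_concat_mk_iff (by simp)).2
      ⟨hm, .of_opponent_defense (by simp) (by simp) rfl hdef⟩
  exact (h _ hO).not_reactsTo_false (by simp) (by simp) rfl
    ((reactsTo_append_iff _ (by simp)).2 hdef)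

end Negation

section Collapse

/-- Move `i` of `d` is the image of the move `a`, played as move `j` of another dialogue, under the
renumbering `g` of the moves. Attacks on move `1` are all sent to the initial move. -/
structure IsImage (g : ℕ → ℕ) (d : List Move) (a : Move) (j i : ℕ) : Prop where
  lt : i < d.length
  parity : i % 2 = j % 2
  stmt : d[i]!.stmt = a.stmt
  ref : a.ref = some (1, true) ∧ i = 0 ∨
    ∃ (k : ℕ) (z : Bool), 2 ≤ k ∧ k < j ∧ a.ref = some (k, z) ∧ d[i]!.ref = some (g k, z)

/-- The renumbering `g` collapses the dialogue `e` for `¬¬ψ` to the dialogue `d` for `ψ`: the two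
opening moves are dropped, and moves made repeatedly in `e` may be identified in `d`. In particular,
all of P's attacks on move `1` of `e`, which assert `ψ`, become the initial move of `d`. The values
of `g` below `2` are irrelevant. -/
structure Collapse (ψ : Formula) (g : ℕ → ℕ) (e d : List Move) : Prop where
  opening : negOpening ψ.neg <+: e
  image : ∀ j, 2 ≤ j → j < e.length → IsImage g d e[j]! j (g j)
  surj : ∀ i < d.length, ∃ j, 2 ≤ j ∧ j < e.length ∧ g j = i

variable {φ ψ : Formula} {g g' : ℕ → ℕ} {d e : List Move} {a m n : Move} {s : Statement}
  {i j k : ℕ} {z : Bool}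

theorem IsImage.mono (h : IsImage g d a j i) (l : List Move) (hg : ∀ k < j, g' k = g k) :
    IsImage g' (d ++ l) a j i where
  lt := by simpa using Nat.lt_add_right _ h.lt
  parity := h.parity
  stmt := by rw [getElem!_append_of_lt l h.lt, h.stmt]
  ref := by
    rw [getElem!_append_of_lt l h.lt]
    refine h.ref.imp_right fun ⟨k, z, hk, hkj, ha, hd⟩ => ⟨k, z, hk, hkj, ha, ?_⟩
    rw [hd, hg k hkj]

namespace Collapse

theorem concat_append (h : Collapse ψ g e d) {l : List Move} (ha : IsImage g (d ++ l) a e.length i)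
    (hl : ∀ i' < (d ++ l).length, d.length ≤ i' → i' = i) :
    Collapse ψ (Function.update g e.length i) (e ++ [a]) (d ++ l) where
  opening := h.opening.trans (List.prefix_append ..)
  image j hj hje := by
    have hg (k : ℕ) (hk : k < e.length) : Function.update g e.length i k = g k :=
      Function.update_of_ne hk.ne _ _
    rw [List.length_append, List.length_singleton, Nat.lt_succ_iff_lt_or_eq] at hje
    rcases hje with hje | rfl
    · rw [getElem!_append_of_lt _ hje, hg j hje]
      exact (h.image j hj hje).mono l fun k hk => hg k (hk.trans hje)
    · rw [getElem!_concat_length, Function.update_self]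
      simpa using ha.mono [] hg
  surj i' hi' := by
    rcases lt_or_ge i' d.length with hlt | hge
    · obtain ⟨j, hj, hje, rfl⟩ := h.surj i' hlt
      exact ⟨j, hj, by grind, Function.update_of_ne hje.ne _ _⟩
    · exact ⟨e.length, h.opening.length_le, by simp,
        (Function.update_self ..).trans (hl i' hi' hge).symm⟩

theorem concat_concat (h : Collapse ψ g e d) {b : Move}
    (ha : IsImage g (d ++ [b]) a e.length d.length) :
    Collapse ψ (Function.update g e.length d.length) (e ++ [a]) (d ++ [b]) :=
  h.concat_append ha fun i' hi' hd => by grind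

theorem concat_left (h : Collapse ψ g e d) (ha : IsImage g d a e.length i) :
    Collapse ψ (Function.update g e.length i) (e ++ [a]) d := by
  simpa using h.concat_append (l := []) (by simpa using ha) fun i' hi' hd => by grind

theorem getElem!_zero (h : Collapse ψ g e d) : e[0]! = ⟨.form ψ.neg.neg, none⟩ := by
  obtain ⟨l, rfl⟩ := h.opening
  simp [negOpening]

theorem getElem!_one (h : Collapse ψ g e d) : e[1]! = ⟨.form ψ.neg, some (0, true)⟩ := by
  obtain ⟨l, rfl⟩ := h.opening
  simp [negOpening]

theorem reactsTo_one (h : Collapse ψ g e d) (hs : ReactsTo e s 1 z) : z = true ∧ s = .form ψ := by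
  obtain ⟨l, rfl⟩ := h.opening
  rw [reactsTo_append_iff l (by simp), reactsTo_one_negOpening_iff] at hs
  obtain ⟨rfl, -, hs⟩ := hs
  cases hs
  exact ⟨rfl, rfl⟩

theorem reactsTo_iff (h : Collapse ψ g e d) (hd : IsDialogue d) (hj : 2 ≤ j) (hje : j < e.length) :
    ReactsTo d s (g j) z ↔ ReactsTo e s j z := by
  have hi := h.image j hj hje
  cases z with
  | true => simp only [ReactsTo, hi.stmt]
  | false =>
    simp only [ReactsTo, hi.stmt]
    constructor
    · rintro ⟨k', χ, hr, -, hχ, hs⟩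
      obtain ⟨-, h0⟩ | ⟨k, z, hk, hkj, hek, hdk⟩ := hi.ref
      · rw [h0, (hd.1 (h0 ▸ hi.lt)).1] at hr
        cases hr
      · cases hdk.symm.trans hr
        rw [(h.image k hk (hkj.trans hje)).stmt] at hχ
        exact ⟨k, χ, hek, hkj, hχ, hs⟩
    · rintro ⟨k', χ, hr, -, hχ, hs⟩
      obtain ⟨h1, -⟩ | ⟨k, z, hk, hkj, hek, hdk⟩ := hi.ref
      · cases h1.symm.trans hr
        rw [h.getElem!_one] at hχ
        cases hχ
        exact absurd hs not_defends_neg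
      · cases hek.symm.trans hr
        rw [← (h.image k' hk (hkj.trans hje)).stmt] at hχ
        exact ⟨g k', χ, hdk, (hd.reactsTo_of_ref_eq hi.lt hdk).1, hχ, hs⟩

theorem isLegal_proponent (h : Collapse ψ g e d) (hd : IsDialogue d) (he : e.length % 2 = 0)
    (hdl : d.length % 2 = 0) (hk : k ≠ 1) (hs : IsLegal e s k z) : IsLegal d s (g k) z := by
  have hke := hs.lt
  have hpar := hs.parity
  have hik := h.image k (by omega) hke
  have hik' := hik.parity
  refine ⟨hik.lt, by omega, (h.reactsTo_iff hd (by omega) hke).2 hs.reactsTo,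
    fun _ a ha => ?_, by omega⟩
  obtain ⟨j, hje, hj, hja⟩ := hs.d10 he a ha
  have hj1 : j ≠ 1 := by
    rintro rfl
    rw [h.getElem!_one] at hja
    cases hja
  have hij := h.image j (by omega) hje
  exact ⟨g j, hij.lt, hij.parity.trans hj, hij.stmt.trans hja⟩

theorem isLegal_opponent (h : Collapse ψ g e d) (hd : IsDialogue d) (he : e.length % 2 = 1)
    (hdl : d.length % 2 = 1) (hj : 2 ≤ j) (hje : j < e.length) (hs : IsLegal d s (g j) z) :
    IsLegal e s j z := by
  have hij := (h.image j hj hje).parity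
  have hpar := hs.parity
  refine ⟨hje, by omega, (h.reactsTo_iff hd hj hje).1 hs.reactsTo, by omega, ?_⟩
  intro _ hz k hke hr
  have hk : 2 ≤ k := by
    by_contra! hk
    interval_cases k
    · rw [h.getElem!_zero] at hr
      cases hr
    · rw [h.getElem!_one] at hr
      cases hr
      omega
  obtain ⟨h1, -⟩ | ⟨k', z', -, -, hek, hdk⟩ := (h.image k hk hke).ref
  · cases h1.symm.trans hr
    omega
  · cases hek.symm.trans hr
    exact hs.d13 (by omega) hz (g k) (h.image k hk hke).lt hdk

theorem exists_reply (h : Collapse ψ g e d) (he : SDialogueFor NRules φ e)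
    (hel : e.length % 2 = 1) (hdl : d.length % 2 = 1) (hn : SDialogueFor NRules ψ (d ++ [n])) :
    ∃ n', SDialogueFor NRules φ (e ++ [n']) ∧
      Collapse ψ (Function.update g e.length d.length) (e ++ [n']) (d ++ [n]) := by
  obtain ⟨s, r⟩ := n
  obtain ⟨hd, i, z, rfl, hlegal⟩ := (sDialogueFor_concat_iff (by omega)).1 hn
  obtain ⟨j, hj, hje, rfl⟩ := h.surj i hlegal.lt
  refine ⟨⟨s, some (j, z)⟩, (sDialogueFor_concat_mk_iff (by omega)).2
    ⟨he, h.isLegal_opponent hd.1 hel hdl hj hje hlegal⟩, h.concat_concat ?_⟩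
  exact { lt := by simp
          parity := by omega
          stmt := by simp
          ref := .inr ⟨j, z, hj, hje, rfl, by simp⟩ }

theorem proponent_move (h : Collapse ψ g e d) (he : IsLegal e s k z) (hk : k ≠ 1)
    (hel : e.length % 2 = 0) (hdl : d.length % 2 = 0)
    (hd : 0 < d.length → SDialogueFor NRules ψ d) :
    SDialogueFor NRules ψ (d ++ [⟨s, some (g k, z)⟩]) ∧
      Collapse ψ (Function.update g e.length d.length)
        (e ++ [⟨s, some (k, z)⟩]) (d ++ [⟨s, some (g k, z)⟩]) := by
  have hke := he.lt
  have hpar := he.parity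
  have hk2 : 2 ≤ k := by omega
  have hpos : 0 < d.length := Nat.zero_lt_of_lt (h.image k hk2 hke).lt
  refine ⟨(sDialogueFor_concat_mk_iff hpos).2
    ⟨hd hpos, h.isLegal_proponent (hd hpos).1 hel hdl hk he⟩, h.concat_concat ?_⟩
  exact { lt := by simp
          parity := by omega
          stmt := by simp
          ref := .inr ⟨k, z, hk2, hke, rfl, by simp⟩ }

theorem proponent_opening (h : Collapse ψ g e []) (he : IsLegal e (.form ψ) 1 true)
    (hel : e.length % 2 = 0) :
    SDialogueFor NRules ψ [⟨.form ψ, none⟩] ∧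
      Collapse ψ (Function.update g e.length 0) (e ++ [⟨.form ψ, some (1, true)⟩])
        [⟨.form ψ, none⟩] := by
  have hlen {j : ℕ} (hj : j < e.length) : j < 2 := by
    by_contra! hj2
    exact absurd (h.image j hj2 hj).lt (Nat.not_lt_zero _)
  refine ⟨sDialogueFor_singleton fun hψ => ?_, h.concat_concat (d := []) ?_⟩
  · cases ψ with
    | atom a =>
      obtain ⟨j, hje, hj, hja⟩ := he.d10 hel a rfl
      have hj2 := hlen hje
      obtain rfl : j = 1 := by omega
      rw [h.getElem!_one] at hja
      cases hja
    | _ => exact hψ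
  · exact { lt := by simp
            parity := hel.symm
            stmt := rfl
            ref := .inl ⟨rfl, rfl⟩ }

/-- The move by which O answers P's renewed assertion of `ψ` is the one by which O attacked the
initial assertion of `ψ` in `d`. -/
theorem exists_reply_repetition (h : Collapse ψ g e d)
    (he : SDialogueFor NRules φ (e ++ [⟨.form ψ, some (1, true)⟩]))
    (hel : e.length % 2 = 0) (hd : SDialogueFor NRules ψ d) (hdl : 1 < d.length) :
    ∃ n g', SDialogueFor NRules φ (e ++ [⟨.form ψ, some (1, true)⟩] ++ [n]) ∧
      Collapse ψ g' (e ++ [⟨.form ψ, some (1, true)⟩] ++ [n]) d := by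
  have hr := hd.1.ref_one hdl
  have hattack : ReactsTo d d[1]!.stmt 0 true := (hd.1.reactsTo_of_ref_eq hdl hr).2.2
  have hψ : d[0]!.stmt = .form ψ := hd.2.2.2
  have hcopy := h.concat_left (a := ⟨.form ψ, some (1, true)⟩) (i := 0)
    { lt := by omega
      parity := by omega
      stmt := hψ
      ref := .inl ⟨rfl, rfl⟩ }
  refine ⟨⟨d[1]!.stmt, some (e.length, true)⟩, _, (sDialogueFor_concat_mk_iff (by simp)).2 ⟨he, ?_⟩,
    hcopy.concat_left (i := 1) ?_⟩
  · exact he.1.isLegal_attack_last hel (by simpa [ReactsTo, ← hψ] using hattack)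
  · exact { lt := hdl
            parity := by grind
            stmt := rfl
            ref := .inr ⟨e.length, true, h.opening.length_le, by simp, rfl, by simpa using hr⟩ }

theorem winning (hw : Winning NRules ψ.neg.neg e) (h : Collapse ψ g e d)
    (hel : e.length % 2 = 0) (hdl : d.length % 2 = 0)
    (hd : 0 < d.length → SDialogueFor NRules ψ d) : Winning NRules ψ d := by
  induction hw generalizing g d with
  | @intro e m hm _ ih =>
    have step {m' : Move} {g' : ℕ → ℕ} (hm' : SDialogueFor NRules ψ (d ++ [m']))
        (h' : Collapse ψ g' (e ++ [m]) (d ++ [m'])) : Winning NRules ψ d := by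
      refine .intro m' hm' fun n hn => ?_
      obtain ⟨n', hn', hc⟩ := h'.exists_reply hm (by grind) (by grind) hn
      exact ih n' hn' hc (by grind) (by grind) fun _ => hn
    obtain ⟨s, r⟩ := m
    obtain ⟨-, k, z, rfl, hlegal⟩ :=
      (sDialogueFor_concat_iff (Nat.zero_lt_of_lt h.opening.length_le)).1 hm
    by_cases hk : k = 1
    · subst hk
      obtain ⟨rfl, rfl⟩ := h.reactsTo_one hlegal.reactsTo
      rcases d.eq_nil_or_concat' with rfl | ⟨d', b, rfl⟩
      · obtain ⟨hm', h'⟩ := h.proponent_opening hlegal hel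
        exact step hm' h'
      · have hpos : 0 < (d' ++ [b]).length := by simp
        obtain ⟨n, g', hn, hc⟩ := h.exists_reply_repetition hm hel (hd hpos) (by omega)
        exact ih n hn hc (by grind) hdl hd
    · obtain ⟨hm', h'⟩ := h.proponent_move hlegal hk hel hdl hd
      exact step hm' h'

end Collapse

theorem Winning.of_negOpening_neg (h : Winning NRules ψ.neg.neg (negOpening ψ.neg)) :
    Winning NRules ψ [] := by
  have h₀ : Collapse ψ id (negOpening ψ.neg) [] :=
    { opening := List.prefix_rfl
      image := fun j hj hj' => absurd hj' (by simpa using hj.not_gt)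
      surj := by simp }
  exact h₀.winning h (by simp) rfl (by simp)

end Collapse

/-- If `¬φ` is N-valid, then `φ` is itself a negation `¬ψ`,
and moreover `ψ` is N-valid. -/
theorem N_valid_negation (φ : Formula) (h : NValid (Formula.neg φ)) :
    ∃ ψ : Formula, φ = Formula.neg ψ ∧ NValid ψ := by
  have hw : Winning NRules φ.neg (negOpening φ) := (sValid_iff_winning_nil.1 h).after_negOpening
  obtain ⟨ψ, rfl⟩ := exists_eq_neg_of_winning_negOpening hw
  exact ⟨ψ, rfl, sValid_iff_winning_nil.2 hw.of_negOpening_neg⟩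
end

section
/- The law of excluded middle p ∨ ¬p, for an atom p, is N-valid. -/
/-!
P defends `p ∨ ¬p` twice.  Asked to choose, P first asserts `¬p`; the only attack on it makes O
assert `p`, and then P, answering the original question anew, may assert `p` as well.  P never
attacks, so O has nothing to defend, and rule D13 lets O attack each assertion only once: O's moves
are all forced, and the strategy consists of a single branch.
-/

theorem getElem!_eq_of_prefix {α : Type*} [Inhabited α] {d e : List α} (he : e <+: d) {i : ℕ}
    (hi : i < e.length) : d[i]! = e[i]! := by
  rw [getElem!_pos e i hi, getElem!_pos d i (hi.trans_le he.length_le), he.getElem hi]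

section Prefixes

variable {d e : List Move}

theorem IsDialogue.of_prefix (h : IsDialogue d) (he : e <+: d) : IsDialogue e := by
  have hlen := he.length_le
  refine ⟨fun h0 ↦ getElem!_eq_of_prefix he h0 ▸ h.1 (h0.trans_le hlen), fun i h0 hi ↦ ?_⟩
  obtain ⟨m, z, href, hm, hpar, hatt, hdef⟩ := h.2 i h0 (hi.trans_le hlen)
  rw [getElem!_eq_of_prefix he hi] at href hatt hdef
  rw [getElem!_eq_of_prefix he (hm.trans hi)] at hatt hdef
  refine ⟨m, z, href, hm, hpar, hatt, fun hz ↦ ?_⟩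
  obtain ⟨k, φ, hk, hkm, hφ, hs⟩ := hdef hz
  rw [getElem!_eq_of_prefix he (hkm.trans (hm.trans hi))] at hφ
  exact ⟨k, φ, hk, hkm, hφ, hs⟩

theorem RuleD10.of_prefix (h : RuleD10 d) (he : e <+: d) : RuleD10 e := by
  intro i hi hpar a ha
  rw [← getElem!_eq_of_prefix he hi] at ha
  obtain ⟨j, hj, hjpar, hja⟩ := h i (hi.trans_le he.length_le) hpar a ha
  exact ⟨j, hj, hjpar, getElem!_eq_of_prefix he (hj.trans hi) ▸ hja⟩

theorem RuleD13.of_prefix (h : RuleD13 d) (he : e <+: d) : RuleD13 e := by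
  intro m hm i hi j hj hri hrj
  rw [← getElem!_eq_of_prefix he hi] at hri
  rw [← getElem!_eq_of_prefix he hj] at hrj
  exact h m hm i (hi.trans_le he.length_le) j (hj.trans_le he.length_le) hri hrj

theorem RuleE.of_prefix (h : RuleE d) (he : e <+: d) : RuleE e := fun i hi hpar ↦
  getElem!_eq_of_prefix he hi ▸ h i (hi.trans_le he.length_le) hpar

theorem CLRules.of_prefix (h : CLRules d) (he : e <+: d) : CLRules e :=
  ⟨h.1.of_prefix he, h.2.1.of_prefix he, h.2.2.of_prefix he⟩

theorem CommencesWith.of_prefix {φ : Formula} (h : CommencesWith φ d) (he : e <+: d)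
    (h0 : 0 < e.length) : CommencesWith φ e :=
  ⟨h0, getElem!_eq_of_prefix he h0 ▸ h.2⟩

theorem SDialogueFor.of_prefix {S : List Move → Prop} {φ : Formula} (h : SDialogueFor S φ d)
    (hS : ∀ ⦃d e⦄, S d → e <+: d → S e) (he : e <+: d) (h0 : 0 < e.length) : SDialogueFor S φ e :=
  ⟨h.1.of_prefix he, hS h.2.1 he, h.2.2.of_prefix he h0⟩

end Prefixes

theorem SDialogueFor.mono {S S' : List Move → Prop} {φ : Formula} {d : List Move}
    (h : SDialogueFor S φ d) (hSS' : S d → S' d) : SDialogueFor S' φ d :=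
  ⟨h.1, hSS' h.2.1, h.2.2⟩

-- For `e = d` the hypothesis `forced` says that O is stuck, `d ++ [m]` not being a prefix of `d`.
theorem isWinningStrategy_prefixes {S : List Move → Prop} {φ : Formula} {d : List Move}
    (dialogues : ∀ e, e <+: d → 0 < e.length → SDialogueFor S φ e) (odd : d.length % 2 = 1)
    (forced : ∀ e m, e <+: d → e.length % 2 = 1 → SDialogueFor S φ (e ++ [m]) → e ++ [m] <+: d) :
    IsWinningStrategy S φ {e | e <+: d ∧ 0 < e.length} where
  nonempty := ⟨d, List.prefix_rfl, by omega⟩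
  dialogues e he := dialogues e he.1 he.2
  prefix_closed e he e' he' h0 := ⟨he'.trans he.1, h0⟩
  leaf_wins e he hleaf := by
    obtain ⟨⟨_ | ⟨m, l⟩, rfl⟩, h0⟩ := he
    · rw [List.append_nil] at dialogues forced odd
      refine ⟨dialogues e List.prefix_rfl h0, odd, fun m hm ↦ ?_⟩
      simpa using (forced e m List.prefix_rfl odd hm).length_le
    · exact (hleaf m ⟨⟨l, by simp⟩, by simp⟩).elim
  no_infinite_branch f := by
    refine ⟨d.length + 1, Nat.succ_pos _, fun h ↦ ?_⟩
    simpa using h.1.length_le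
  odd_unique_child e he _ heven := by
    obtain ⟨⟨_ | ⟨m, l⟩, rfl⟩, -⟩ := he
    · rw [List.append_nil] at odd
      omega
    · refine ⟨m, ⟨⟨l, by simp⟩, by simp⟩, fun m' hm' ↦ ?_⟩
      simpa using hm'.1
  even_all_children e he hodd m hm := ⟨forced e m he.1 hodd hm, by simp⟩

theorem exists_fresh_attack_of_forall_ref_ne {d : List Move} {m : Move}
    (h : IsDialogue (d ++ [m])) (h13 : RuleD13 (d ++ [m])) (hodd : d.length % 2 = 1)
    (no_attack : ∀ k < d.length, k % 2 = 0 → ∀ j, d[k]!.ref ≠ some (j, true)) :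
    ∃ k < d.length, k % 2 = 0 ∧ m.ref = some (k, true) ∧
      (∀ i < d.length, d[i]!.ref ≠ some (k, true)) ∧
      ∃ φ : Formula, d[k]!.stmt = .form φ ∧ ¬ φ.isAtomic ∧ Attacks m.stmt φ := by
  have old {i : ℕ} (hi : i < d.length) : (d ++ [m])[i]! = d[i]! :=
    getElem!_eq_of_prefix (List.prefix_append d [m]) hi
  have new : (d ++ [m])[d.length]! = m := by simp
  have hlen : (d ++ [m]).length = d.length + 1 := by simp
  obtain ⟨k, z, href, hk, hpar, hatt, hdef⟩ := h.2 d.length (by omega) (by omega)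
  have heven : k % 2 = 0 := by omega
  rw [new] at href hatt
  rw [old hk] at hatt hdef
  cases z with
  | false =>
    obtain ⟨j, -, hj, -⟩ := hdef rfl
    exact (no_attack k hk heven j hj).elim
  | true =>
    refine ⟨k, hk, heven, href, fun i hi hri ↦ hi.ne ?_, hatt rfl⟩
    exact h13 k heven i (by omega) d.length (by omega) (by rwa [old hi]) (by rwa [new])

/-- The only branch of P's strategy for `p ∨ ¬p`: both moves 2 and 4 answer the question asked at
move 1. -/
def excludedMiddlePlay (p : ℕ) : List Move :=
  [⟨.form (.disj (.atom p) (.neg (.atom p))), none⟩,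
    ⟨.question, some (0, true)⟩,
    ⟨.form (.neg (.atom p)), some (1, false)⟩,
    ⟨.form (.atom p), some (2, true)⟩,
    ⟨.form (.atom p), some (1, false)⟩]

theorem isDialogue_excludedMiddlePlay (p : ℕ) : IsDialogue (excludedMiddlePlay p) := by
  refine ⟨fun _ ↦ ⟨rfl, _, rfl⟩, fun i h0 (hi : i < 5) ↦ ?_⟩
  interval_cases i
  · exact ⟨0, true, rfl, by simp, by simp, fun _ ↦ ⟨_, rfl, id, .disj _ _⟩, nofun⟩
  · exact ⟨1, false, rfl, by simp, by simp, nofun, fun _ ↦ ⟨0, _, rfl, by simp, rfl, .disjR _ _⟩⟩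
  · exact ⟨2, true, rfl, by simp, by simp, fun _ ↦ ⟨_, rfl, id, .neg _⟩, nofun⟩
  · exact ⟨1, false, rfl, by simp, by simp, nofun, fun _ ↦ ⟨0, _, rfl, by simp, rfl, .disjL _ _⟩⟩

theorem ruleD10_excludedMiddlePlay (p : ℕ) : RuleD10 (excludedMiddlePlay p) := by
  intro i (hi : i < 5) hpar a ha
  obtain rfl | rfl | rfl : i = 0 ∨ i = 2 ∨ i = 4 := by omega
  · cases ha
  · cases ha
  · exact ⟨3, by simp, rfl, ha⟩

theorem eq_succ_and_even_of_attack_excludedMiddlePlay {p i k : ℕ} (hi : i < 5)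
    (h : (excludedMiddlePlay p)[i]!.ref = some (k, true)) : i = k + 1 ∧ k % 2 = 0 := by
  interval_cases i <;> cases h <;> simp

theorem ruleD13_excludedMiddlePlay (p : ℕ) : RuleD13 (excludedMiddlePlay p) := by
  intro m _ i hi j hj hri hrj
  obtain ⟨hi_eq, -⟩ := eq_succ_and_even_of_attack_excludedMiddlePlay hi hri
  obtain ⟨hj_eq, -⟩ := eq_succ_and_even_of_attack_excludedMiddlePlay hj hrj
  exact hi_eq.trans hj_eq.symm

theorem ruleE_excludedMiddlePlay (p : ℕ) : RuleE (excludedMiddlePlay p) := by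
  intro i (hi : i < 5) hpar
  interval_cases i <;> simp [excludedMiddlePlay] at hpar ⊢

theorem sDialogueFor_excludedMiddlePlay (p : ℕ) :
    SDialogueFor CLRules (.disj (.atom p) (.neg (.atom p))) (excludedMiddlePlay p) :=
  ⟨isDialogue_excludedMiddlePlay p,
    ⟨ruleD10_excludedMiddlePlay p, ruleD13_excludedMiddlePlay p, ruleE_excludedMiddlePlay p⟩,
    Nat.succ_pos _, rfl⟩

theorem excludedMiddlePlay_ref_ne_attack {p k : ℕ} (hk : k < 5) (heven : k % 2 = 0) (j : ℕ) :
    (excludedMiddlePlay p)[k]!.ref ≠ some (j, true) := by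
  intro href
  have := eq_succ_and_even_of_attack_excludedMiddlePlay hk href
  omega

theorem append_singleton_prefix_excludedMiddlePlay {p : ℕ} {e : List Move} {m : Move}
    (he : e <+: excludedMiddlePlay p) (hodd : e.length % 2 = 1) (h : IsDialogue (e ++ [m]))
    (h13 : RuleD13 (e ++ [m])) : e ++ [m] <+: excludedMiddlePlay p := by
  have hlen : e.length ≤ 5 := he.length_le
  obtain ⟨k, hk, heven, href, fresh, φ, hφ, hna, hatt⟩ :=
    exists_fresh_attack_of_forall_ref_ne h h13 hodd fun k hk heven j ↦
      getElem!_eq_of_prefix he hk ▸ excludedMiddlePlay_ref_ne_attack (hk.trans_le hlen) heven j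
  rw [← getElem!_eq_of_prefix he hk] at hφ
  have fresh_play (i : ℕ) (hi : i < e.length) : (excludedMiddlePlay p)[i]!.ref ≠ some (k, true) :=
    getElem!_eq_of_prefix he hi ▸ fresh i hi
  have e_eq := List.prefix_iff_eq_take.mp he
  obtain ⟨s, r⟩ := m
  obtain rfl : r = some (k, true) := href
  obtain rfl | rfl | rfl : k = 0 ∨ k = 2 ∨ k = 4 := by omega
  · have e_length : e.length = 1 := by
      by_contra hne
      exact fresh_play 1 (by omega) rfl
    cases hφ
    cases hatt
    rw [e_eq, e_length]
    exact ⟨(excludedMiddlePlay p).drop 2, rfl⟩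
  · have e_length : e.length = 3 := by
      by_contra hne
      exact fresh_play 3 (by omega) rfl
    cases hφ
    cases hatt
    rw [e_eq, e_length]
    exact ⟨(excludedMiddlePlay p).drop 4, rfl⟩
  · cases hφ
    exact (hna trivial).elim

theorem excluded_middle_N_valid_general (p : ℕ) {S : List Move → Prop}
    (of_CLRules : ∀ d, CLRules d → S d) (ruleD13 : ∀ d, S d → RuleD13 d) :
    SValid S (.disj (.atom p) (.neg (.atom p))) := by
  refine ⟨_, isWinningStrategy_prefixes (d := excludedMiddlePlay p) (fun e he h0 ↦ ?_)
    (by simp [excludedMiddlePlay]) fun e m he hodd h ↦ ?_⟩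
  · have cl_dialogue := (sDialogueFor_excludedMiddlePlay p).of_prefix
      (fun _ _ ↦ CLRules.of_prefix) he h0
    exact cl_dialogue.mono (of_CLRules e)
  · exact append_singleton_prefix_excludedMiddlePlay he hodd h.1 (ruleD13 _ h.2.1)

/-- The law of excluded middle `p ∨ ¬p`, for an atom `p`, is
N-valid. -/
theorem excluded_middle_N_valid (p : ℕ) :
    NValid (Formula.disj (Formula.atom p) (Formula.neg (Formula.atom p))) := by
  exact excluded_middle_N_valid_general p (fun _ h ↦ ⟨h.1, h.2.1⟩) fun _ h ↦ h.2
end
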